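/- arXiv:1907.03439 — 2 statements merged into one kernel-verified Lean document; each statement's English description precedes it below -/
import Mathlib

section
/- Let A = (A_1,…,A_n) be a nonnegative vector in ℝ^n, D = n + A_1 + ⋯ + A_n, and α > 0. The function φ_α(x) = exp(−C_A(α)|x|^α), with C_A(α) = ( (Γ(D/α + 1)/Γ(D/2 + 1)) · Π(A)^{D/2} )^{α/D}, satisfies ∫_{ℝ^n_A} φ_α x^A dx = 1, ∫_{ℝ^n_A} φ_α |x|^α x^A dx = D/(α C_A(α)), and attains equality in the weighted Shannon inequality: −∫_{ℝ^n_A} φ_α log(φ_α) x^A dx = (D/α) · log( (α C_A(α) e / D) ∫_{ℝ^n_A} φ_α |x|^α x^A dx ). -/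
open MeasureTheory Real Filter

noncomputable section

/-- The positivity region `ℝ^n_A = {x : x_i > 0 whenever A_i > 0}`. -/
def monSet {ι : Type*} [Fintype ι] (A : ι → ℝ) : Set (EuclideanSpace ℝ ι) :=
  {x | ∀ i, 0 < A i → 0 < x i}

/-- The monomial weight `x^A = ∏ |x_i|^{A_i}`. -/
def monWeight {ι : Type*} [Fintype ι] (A : ι → ℝ) (x : EuclideanSpace ℝ ι) : ℝ :=
  ∏ i, |x i| ^ A i

/-- The homogeneous dimension `D = n + A_1 + ⋯ + A_n`. -/
def monDim {ι : Type*} [Fintype ι] (A : ι → ℝ) : ℝ :=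
  (Fintype.card ι : ℝ) + ∑ i, A i

/-- `k = #{i : A_i > 0}`. -/
def monK {ι : Type*} [Fintype ι] (A : ι → ℝ) : ℕ :=
  Nat.card {i : ι // 0 < A i}

/-- `Π(A) = [ (∏ Γ((A_i+1)/2)) / 2^k ]^{2/D}`. -/
def monPi {ι : Type*} [Fintype ι] (A : ι → ℝ) : ℝ :=
  ((∏ i, Gamma ((A i + 1) / 2)) / 2 ^ monK A) ^ (2 / monDim A)

/-- The constant `C_A(α) = ( (Γ(D/α+1)/Γ(D/2+1)) Π(A)^{D/2} )^{α/D}`. -/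
def monCA {ι : Type*} [Fintype ι] (A : ι → ℝ) (α : ℝ) : ℝ :=
  (Gamma (monDim A / α + 1) / Gamma (monDim A / 2 + 1) * monPi A ^ (monDim A / 2)) ^
    (α / monDim A)

/-!
The weight `x^A` on `ℝ^n_A`, extended by zero, is positively homogeneous of degree `D - n`. Polar
coordinates therefore turn the integral of a radial function against any such density into a
constant of the density times a one-dimensional integral against `r ^ (D - 1)`, and for
`r ^ q * exp (-b * r ^ p)` the latter is a Gamma value. The functional equation of `Γ` gives the
`p`-th moment in terms of the mass, and `log φ = -b‖x‖^p` reduces the entropy to that moment.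
The constant of the density is found by testing on the Gaussian `p = 2`, whose integral against
`x^A` factors over the coordinates; `C_A(α)` is then exactly the value of `b` with total mass one.
-/

section PolarCoordinates

variable {F : Type*} [NormedAddCommGroup F] [NormedSpace ℝ F]

theorem integral_volumeIoiPow (n : ℕ) (g : ℝ → F) :
    ∫ r : Set.Ioi (0 : ℝ), g r ∂.volumeIoiPow n = ∫ r in Set.Ioi (0 : ℝ), r ^ n • g r := by
  rw [Measure.volumeIoiPow, integral_withDensity_eq_integral_toReal_smul (by fun_prop) (by simp),
    integral_subtype_comap measurableSet_Ioi fun r : ℝ => (ENNReal.ofReal (r ^ n)).toReal • g r]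
  refine setIntegral_congr_fun measurableSet_Ioi fun r (hr : 0 < r) => ?_
  simp only [ENNReal.toReal_ofReal (pow_nonneg hr.le n)]

/-- Positive homogeneity of real degree `s` of a function on a real vector space. Only dilations by
positive factors are considered, so that negative and non-integer degrees make sense. -/
def IsPosHomogeneous {E : Type*} [SMul ℝ E] (f : E → ℝ) (s : ℝ) : Prop :=
  ∀ ⦃r : ℝ⦄, 0 < r → ∀ x, f (r • x) = r ^ s * f x

namespace IsPosHomogeneous

variable {E : Type*} [NormedAddCommGroup E] [NormedSpace ℝ E] {f : E → ℝ} {s : ℝ}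

theorem apply_eq_norm_rpow_mul (hf : IsPosHomogeneous f s) {x : E} (hx : x ≠ 0) :
    f x = ‖x‖ ^ s * f (‖x‖⁻¹ • x) := by
  rw [← hf (norm_pos_iff.2 hx), smul_inv_smul₀ (norm_ne_zero_iff.2 hx)]

variable [FiniteDimensional ℝ E] [Nontrivial E] [MeasurableSpace E] [BorelSpace E]
  (μ : Measure E) [μ.IsAddHaarMeasure]

theorem integral_smul_fun_norm (hf : IsPosHomogeneous f s) (g : ℝ → F) :
    ∫ x, f x • g ‖x‖ ∂μ =
      (∫ u, f u.1 ∂μ.toSphere) •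
        ∫ r in Set.Ioi (0 : ℝ), r ^ (Module.finrank ℝ E + s - 1) • g r := by
  calc
    ∫ x, f x • g ‖x‖ ∂μ = ∫ x : ({0}ᶜ : Set E), f x • g ‖x.1‖ ∂μ.comap (↑) := by
      rw [integral_subtype_comap (measurableSet_singleton _).compl fun x => f x • g ‖x‖,
        restrict_compl_singleton]
    _ = ∫ z, f z.1.1 • (z.2.1 ^ s • g z.2.1)
          ∂μ.toSphere.prod (.volumeIoiPow (Module.finrank ℝ E - 1)) := by
      rw [← μ.measurePreserving_homeomorphUnitSphereProd.integral_comp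
        (Homeomorph.measurableEmbedding _)]
      refine integral_congr_ae (.of_forall fun x => ?_)
      simp only [homeomorphUnitSphereProd_apply_fst_coe, homeomorphUnitSphereProd_apply_snd_coe]
      rw [hf.apply_eq_norm_rpow_mul x.2, smul_smul, mul_comm]
    _ = (∫ u, f u.1 ∂μ.toSphere) •
          ∫ r : Set.Ioi (0 : ℝ), r.1 ^ s • g r ∂.volumeIoiPow (Module.finrank ℝ E - 1) :=
      integral_prod_smul (fun u : Metric.sphere (0 : E) 1 => f u)
        fun r : Set.Ioi (0 : ℝ) => r.1 ^ s • g r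
    _ = _ := by
      rw [integral_volumeIoiPow _ fun r => r ^ s • g r]
      congr 1
      refine setIntegral_congr_fun measurableSet_Ioi fun r (hr : 0 < r) => ?_
      simp only [smul_smul, ← rpow_natCast, ← rpow_add hr, Nat.cast_pred Module.finrank_pos,
        sub_add_eq_add_sub]

variable {p b : ℝ}

theorem integral_exp_neg_mul_norm_rpow_mul_norm_rpow (hf : IsPosHomogeneous f s) {q : ℝ}
    (hq : 0 < Module.finrank ℝ E + s + q) (hp : 0 < p) (hb : 0 < b) :
    ∫ x, exp (-(b * ‖x‖ ^ p)) * ‖x‖ ^ q * f x ∂μ =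
      (∫ u, f u.1 ∂μ.toSphere) * (b ^ (-(Module.finrank ℝ E + s + q) / p) * (1 / p) *
        Gamma ((Module.finrank ℝ E + s + q) / p)) := by
  have hpolar := hf.integral_smul_fun_norm μ fun r => exp (-(b * r ^ p)) * r ^ q
  have hradial := integral_rpow_mul_exp_neg_mul_rpow
    (q := Module.finrank ℝ E + s - 1 + q) hp (by linarith) hb
  rw [show Module.finrank ℝ E + s - 1 + q + 1 = Module.finrank ℝ E + s + q by ring] at hradial
  simp only [smul_eq_mul] at hpolar
  simp_rw [mul_comm _ (f _)]
  rw [hpolar, ← hradial]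
  congr 1
  refine setIntegral_congr_fun measurableSet_Ioi fun r (hr : 0 < r) => ?_
  simp only [rpow_add hr, neg_mul]
  ring

theorem integral_exp_neg_mul_norm_rpow (hf : IsPosHomogeneous f s)
    (hs : 0 < Module.finrank ℝ E + s) (hp : 0 < p) (hb : 0 < b) :
    ∫ x, exp (-(b * ‖x‖ ^ p)) * f x ∂μ =
      (∫ u, f u.1 ∂μ.toSphere) * (b ^ (-(Module.finrank ℝ E + s) / p) * (1 / p) *
        Gamma ((Module.finrank ℝ E + s) / p)) := by
  simpa only [rpow_zero, mul_one, add_zero] using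
    hf.integral_exp_neg_mul_norm_rpow_mul_norm_rpow μ (q := 0) (by simpa using hs) hp hb

theorem integral_exp_neg_mul_norm_rpow_eq_mul_gaussian (hf : IsPosHomogeneous f s)
    (hs : 0 < Module.finrank ℝ E + s) (hp : 0 < p) (hb : 0 < b) :
    ∫ x, exp (-(b * ‖x‖ ^ p)) * f x ∂μ =
      b ^ (-((Module.finrank ℝ E + s) / p)) *
        (Gamma ((Module.finrank ℝ E + s) / p + 1) / Gamma ((Module.finrank ℝ E + s) / 2 + 1) *
          ∫ x, exp (-‖x‖ ^ 2) * f x ∂μ) := by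
  have hgauss := hf.integral_exp_neg_mul_norm_rpow μ hs two_pos one_pos
  simp only [one_mul, rpow_two, one_rpow] at hgauss
  rw [hgauss, hf.integral_exp_neg_mul_norm_rpow μ hs hp hb]
  set D := Module.finrank ℝ E + s
  have hΓ : Gamma (D / 2) ≠ 0 := (Gamma_pos_of_pos (by positivity)).ne'
  rw [Gamma_add_one (s := D / p) (by positivity), Gamma_add_one (s := D / 2) (by positivity),
    neg_div]
  field_simp [hΓ]

theorem integral_exp_neg_mul_norm_rpow_mul_norm_rpow_self (hf : IsPosHomogeneous f s)
    (hs : 0 < Module.finrank ℝ E + s) (hp : 0 < p) (hb : 0 < b) :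
    ∫ x, exp (-(b * ‖x‖ ^ p)) * ‖x‖ ^ p * f x ∂μ =
      (Module.finrank ℝ E + s) / (p * b) * ∫ x, exp (-(b * ‖x‖ ^ p)) * f x ∂μ := by
  rw [hf.integral_exp_neg_mul_norm_rpow_mul_norm_rpow μ (by linarith) hp hb,
    hf.integral_exp_neg_mul_norm_rpow μ hs hp hb]
  set D := Module.finrank ℝ E + s
  have hpow : b ^ (-(D + p) / p) = b ^ (-D / p) / b := by
    rw [← rpow_sub_one hb.ne']
    congr 1
    field_simp
    ring
  rw [hpow, add_div, div_self hp.ne', Gamma_add_one (by positivity)]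
  field_simp

theorem integral_exp_neg_mul_norm_rpow_mul_log (hf : IsPosHomogeneous f s)
    (hs : 0 < Module.finrank ℝ E + s) (hp : 0 < p) (hb : 0 < b) :
    ∫ x, exp (-(b * ‖x‖ ^ p)) * log (exp (-(b * ‖x‖ ^ p))) * f x ∂μ =
      -((Module.finrank ℝ E + s) / p * ∫ x, exp (-(b * ‖x‖ ^ p)) * f x ∂μ) := by
  calc
    _ = ∫ x, -b * (exp (-(b * ‖x‖ ^ p)) * ‖x‖ ^ p * f x) ∂μ := by
      refine integral_congr_ae (.of_forall fun x => ?_)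
      simp only [log_exp]
      ring
    _ = -b * ((Module.finrank ℝ E + s) / (p * b) * ∫ x, exp (-(b * ‖x‖ ^ p)) * f x ∂μ) := by
      rw [integral_const_mul, hf.integral_exp_neg_mul_norm_rpow_mul_norm_rpow_self μ hs hp hb]
    _ = _ := by field_simp

end IsPosHomogeneous

end PolarCoordinates

section CoordWeight

/-- The density on `ℝ` of the one-dimensional monomial measure: `|t| ^ a`, cut off to the positive
half-line when `0 < a`. The monomial weight on `ℝ^n_A`, extended by zero, is a product of these. -/
def coordWeight (a : ℝ) : ℝ → ℝ :=
  {t | 0 < a → 0 < t}.indicator (|·| ^ a)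

theorem coordWeight_of_pos {a : ℝ} (ha : 0 < a) :
    coordWeight a = (Set.Ioi 0).indicator (|·| ^ a) := by
  simp only [coordWeight, ha, true_imp_iff]
  rfl

theorem coordWeight_of_nonpos {a : ℝ} (ha : a ≤ 0) : coordWeight a = (|·| ^ a) := by
  simp [coordWeight, ha.not_gt]

theorem coordWeight_mul (a : ℝ) {r : ℝ} (hr : 0 < r) (t : ℝ) :
    coordWeight a (r * t) = r ^ a * coordWeight a t := by
  simp only [coordWeight, Set.indicator_apply, Set.mem_ofPred_eq, mul_pos_iff_of_pos_left hr,
    abs_mul, abs_of_pos hr, mul_rpow hr.le (abs_nonneg t), mul_ite, mul_zero]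

theorem integral_exp_neg_sq_mul_coordWeight {a : ℝ} (ha : -1 < a) :
    ∫ t, exp (-t ^ 2) * coordWeight a t = Gamma ((a + 1) / 2) / if 0 < a then 2 else 1 := by
  have hhalf : ∫ t in Set.Ioi (0 : ℝ), exp (-t ^ 2) * t ^ a = Gamma ((a + 1) / 2) / 2 := by
    simpa only [rpow_two, mul_comm, one_div, div_eq_mul_inv, one_mul] using
      integral_rpow_mul_exp_neg_rpow two_pos ha
  rcases lt_or_ge 0 a with hpos | hnonpos
  · simp only [coordWeight_of_pos hpos, ← Set.indicator_mul_right _ fun t : ℝ => exp (-t ^ 2)]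
    rw [integral_indicator measurableSet_Ioi, if_pos hpos, ← hhalf]
    exact setIntegral_congr_fun measurableSet_Ioi fun t (ht : 0 < t) => by
      simp only [abs_of_pos ht]
  · have heven := integral_comp_abs (f := fun t => exp (-t ^ 2) * t ^ a)
    simp only [sq_abs] at heven
    rw [coordWeight_of_nonpos hnonpos, heven, hhalf, if_neg hnonpos.not_gt]
    ring

end CoordWeight

section MonomialWeight

variable {ι : Type*} [Fintype ι]

theorem integral_exp_neg_norm_sq_mul_prod (f : ι → ℝ → ℝ) :
    ∫ x : EuclideanSpace ℝ ι, exp (-‖x‖ ^ 2) * ∏ i, f i (x i) =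
      ∏ i, ∫ t, exp (-t ^ 2) * f i t := by
  rw [← integral_fintype_prod_volume_eq_prod,
    ← (PiLp.volume_preserving_ofLp ι).integral_comp
      (MeasurableEquiv.toLp 2 (ι → ℝ)).symm.measurableEmbedding]
  simp only [EuclideanSpace.real_norm_sq_eq, ← Finset.sum_neg_distrib, exp_sum,
    Finset.prod_mul_distrib]

theorem measurableSet_monSet (A : ι → ℝ) : MeasurableSet (monSet A) := by
  simp only [monSet, Set.ofPred_forall]
  exact .iInter fun i => .iInter fun _ => measurableSet_lt measurable_const (by fun_prop)

theorem indicator_monSet_monWeight (A : ι → ℝ) (x : EuclideanSpace ℝ ι) :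
    (monSet A).indicator (monWeight A) x = ∏ i, coordWeight (A i) (x i) := by
  have hset : monSet A = ⋂ i ∈ Finset.univ, {y | 0 < A i → 0 < y i} := by
    ext
    simp [monSet]
  have hweight : monWeight A = ∏ i, fun y : EuclideanSpace ℝ ι => |y i| ^ A i := by
    ext
    simp [monWeight]
  rw [hset, hweight, ← prod_indicator_apply]
  rfl

theorem setIntegral_monSet_mul_monWeight (A : ι → ℝ) (g : EuclideanSpace ℝ ι → ℝ) :
    ∫ x in monSet A, g x * monWeight A x =
      ∫ x, g x * (monSet A).indicator (monWeight A) x := by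
  simp only [← integral_indicator (measurableSet_monSet A), Set.indicator_mul_right]

theorem isPosHomogeneous_indicator_monSet_monWeight (A : ι → ℝ) :
    IsPosHomogeneous ((monSet A).indicator (monWeight A)) (∑ i, A i) := fun r hr x => by
  simp only [indicator_monSet_monWeight, PiLp.smul_apply, smul_eq_mul, coordWeight_mul _ hr,
    Finset.prod_mul_distrib, rpow_sum_of_pos hr]

theorem finrank_add_sum_eq_monDim (A : ι → ℝ) :
    Module.finrank ℝ (EuclideanSpace ℝ ι) + ∑ i, A i = monDim A := by
  rw [finrank_euclideanSpace, monDim]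

theorem prod_ite_pos_eq_two_pow_monK (A : ι → ℝ) :
    ∏ i, (if 0 < A i then (2 : ℝ) else 1) = 2 ^ monK A := by
  classical
  rw [Finset.prod_ite, Finset.prod_const, Finset.prod_const_one, mul_one, monK,
    Nat.card_eq_fintype_card, Fintype.card_subtype]

variable {A : ι → ℝ}

theorem integral_exp_neg_norm_sq_mul_monWeight (hA : ∀ i, -1 < A i) :
    ∫ x, exp (-‖x‖ ^ 2) * (monSet A).indicator (monWeight A) x =
      (∏ i, Gamma ((A i + 1) / 2)) / 2 ^ monK A := by
  simp only [indicator_monSet_monWeight, integral_exp_neg_norm_sq_mul_prod,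
    integral_exp_neg_sq_mul_coordWeight (hA _), Finset.prod_div_distrib,
    prod_ite_pos_eq_two_pow_monK]

theorem prod_Gamma_div_two_pow_monK_pos (hA : ∀ i, -1 < A i) :
    0 < (∏ i, Gamma ((A i + 1) / 2)) / 2 ^ monK A :=
  div_pos (Finset.prod_pos fun i _ => Gamma_pos_of_pos (by linarith [hA i])) (by positivity)

variable [Nonempty ι]

theorem monDim_pos (hA : ∀ i, -1 < A i) : 0 < monDim A := by
  have hsum : 0 < ∑ i, (1 + A i) :=
    Finset.sum_pos (fun i _ => by linarith [hA i]) Finset.univ_nonempty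
  simpa [monDim, Finset.sum_add_distrib] using hsum

theorem monPi_rpow (hA : ∀ i, -1 < A i) :
    monPi A ^ (monDim A / 2) = (∏ i, Gamma ((A i + 1) / 2)) / 2 ^ monK A := by
  rw [monPi, ← rpow_mul (prod_Gamma_div_two_pow_monK_pos hA).le,
    div_mul_div_cancel₀ (monDim_pos hA).ne', div_self two_ne_zero, rpow_one]

variable {α : ℝ}

theorem Gamma_div_Gamma_mul_monPi_rpow_pos (hA : ∀ i, -1 < A i) (hα : 0 < α) :
    0 < Gamma (monDim A / α + 1) / Gamma (monDim A / 2 + 1) * monPi A ^ (monDim A / 2) := by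
  have hD := monDim_pos hA
  rw [monPi_rpow hA]
  exact mul_pos (div_pos (Gamma_pos_of_pos (by positivity)) (Gamma_pos_of_pos (by positivity)))
    (prod_Gamma_div_two_pow_monK_pos hA)

theorem monCA_pos (hA : ∀ i, -1 < A i) (hα : 0 < α) : 0 < monCA A α :=
  rpow_pos_of_pos (Gamma_div_Gamma_mul_monPi_rpow_pos hA hα) _

theorem monCA_rpow (hA : ∀ i, -1 < A i) (hα : 0 < α) :
    monCA A α ^ (monDim A / α) =
      Gamma (monDim A / α + 1) / Gamma (monDim A / 2 + 1) * monPi A ^ (monDim A / 2) := by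
  rw [monCA, ← rpow_mul (Gamma_div_Gamma_mul_monPi_rpow_pos hA hα).le,
    div_mul_div_cancel₀ (monDim_pos hA).ne', div_self hα.ne', rpow_one]

theorem integral_exp_neg_monCA_mul_monWeight (hA : ∀ i, -1 < A i) (hα : 0 < α) :
    ∫ x, exp (-(monCA A α * ‖x‖ ^ α)) * (monSet A).indicator (monWeight A) x = 1 := by
  have hmass := (isPosHomogeneous_indicator_monSet_monWeight A)
    |>.integral_exp_neg_mul_norm_rpow_eq_mul_gaussian volume
      (by simpa only [finrank_add_sum_eq_monDim] using monDim_pos hA) hα (monCA_pos hA hα)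
  rw [hmass, finrank_add_sum_eq_monDim, integral_exp_neg_norm_sq_mul_monWeight hA, ← monPi_rpow hA,
    ← monCA_rpow hA hα, ← rpow_add (monCA_pos hA hα), neg_add_cancel, rpow_zero]

theorem extremal_shannon_monomial_weight_general (hA : ∀ i, -1 < A i) (hα : 0 < α)
    {φ : EuclideanSpace ℝ ι → ℝ} (hφ : φ = fun x => exp (-(monCA A α * ‖x‖ ^ α))) :
    (∫ x in monSet A, φ x * monWeight A x) = 1 ∧
    (∫ x in monSet A, φ x * ‖x‖ ^ α * monWeight A x) = monDim A / (α * monCA A α) ∧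
    -∫ x in monSet A, φ x * log (φ x) * monWeight A x =
      monDim A / α *
        log (α * monCA A α * exp 1 / monDim A *
          ∫ x in monSet A, φ x * ‖x‖ ^ α * monWeight A x) := by
  subst hφ
  have hD := monDim_pos hA
  have hC := monCA_pos hA hα
  have hhom := isPosHomogeneous_indicator_monSet_monWeight A
  have hdim := finrank_add_sum_eq_monDim A
  have hmass := integral_exp_neg_monCA_mul_monWeight hA hα
  have hmoment := hhom.integral_exp_neg_mul_norm_rpow_mul_norm_rpow_self volume
    (hdim ▸ hD) hα hC
  have hentropy := hhom.integral_exp_neg_mul_norm_rpow_mul_log volume (hdim ▸ hD) hα hC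
  rw [hmass, mul_one, hdim] at hmoment hentropy
  have harg : α * monCA A α * exp 1 / monDim A * (monDim A / (α * monCA A α)) = exp 1 := by
    field_simp
  simp only [setIntegral_monSet_mul_monWeight]
  refine ⟨hmass, hmoment, ?_⟩
  rw [hmoment, hentropy, harg, log_exp, neg_neg, mul_one]

end MonomialWeight

/-- the function `φ_α(x) = exp(-C_A(α)|x|^α)` is normalized, has `α`-moment
`D/(α C_A(α))`, and attains equality in the weighted Shannon inequality. -/
theorem extremal_shannon_monomial_weight {n : ℕ} (hn : 0 < n) (A : Fin n → ℝ)
    (hA : ∀ i, 0 ≤ A i) (α : ℝ) (hα : 0 < α)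
    (φ : EuclideanSpace ℝ (Fin n) → ℝ)
    (hφ : φ = fun x => exp (-(monCA A α * ‖x‖ ^ α))) :
    (∫ x in monSet A, φ x * monWeight A x) = 1 ∧
    (∫ x in monSet A, φ x * ‖x‖ ^ α * monWeight A x) = monDim A / (α * monCA A α) ∧
    -∫ x in monSet A, φ x * log (φ x) * monWeight A x =
      monDim A / α *
        log (α * monCA A α * exp 1 / monDim A *
          ∫ x in monSet A, φ x * ‖x‖ ^ α * monWeight A x) := by
  have : Nonempty (Fin n) := ⟨⟨0, hn⟩⟩
  exact extremal_shannon_monomial_weight_general (fun i => by linarith [hA i]) hα hφ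
end
end

section
/- Let A = (A_1,…,A_n) be a nonnegative vector in ℝ^n and D = n + A_1 + ⋯ + A_n. Then for every continuously differentiable function f : ℝ^n → ℝ with compact support satisfying ∫_{ℝ^n_A} |f|^2 x^A dx = 1, one has D^2/4 ≤ ( ∫_{ℝ^n_A} |f|^2 |x|^2 x^A dx ) · ( ∫_{ℝ^n_A} |∇f|^2 x^A dx ). -/
open MeasureTheory Real Filter

noncomputable section

/-!
Only the scaling of the measure `μ = x^A dx` matters: `μ` is multiplied by `t ^ D` under the
dilation `x ↦ t • x`. Differentiating `∫ g (t • x) dμ = t ^ (-D) ∫ g dμ` at `t = 1` gives Euler's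
identity `∫ Dg(x) x dμ = -D ∫ g dμ`. For `g = ‖f‖ ^ 2` the left-hand side is `2 ∫ ⟪f, Df(x) x⟫ dμ`,
which the Cauchy–Schwarz inequality bounds by the two factors of the uncertainty principle.
-/

theorem sq_integral_mul_le {α : Type*} [MeasurableSpace α] {μ : Measure α} {u v : α → ℝ}
    (hu : MemLp u 2 μ) (hv : MemLp v 2 μ) :
    (∫ x, u x * v x ∂μ) ^ 2 ≤ (∫ x, u x ^ 2 ∂μ) * ∫ x, v x ^ 2 ∂μ := by
  have inner_toLp {u v : α → ℝ} (hu : MemLp u 2 μ) (hv : MemLp v 2 μ) :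
      inner ℝ (hu.toLp u) (hv.toLp v) = ∫ x, u x * v x ∂μ := by
    rw [L2.inner_def]
    refine integral_congr_ae ?_
    filter_upwards [hu.coeFn_toLp, hv.coeFn_toLp] with x hux hvx
    rw [hux, hvx, Real.inner_apply]
  simpa only [inner_toLp, ← sq] using real_inner_mul_inner_self_le (hu.toLp u) (hv.toLp v)

section ParametricIntegral

variable {G : Type*} [NormedAddCommGroup G] [NormedSpace ℝ G]

theorem hasDerivAt_integral_of_continuous_of_compact_support {X : Type*} [TopologicalSpace X]
    [T2Space X] [MeasurableSpace X] [OpensMeasurableSpace X] {μ : Measure X}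
    [IsFiniteMeasureOnCompacts μ] {F F' : ℝ → X → G} {t₀ : ℝ} {I : Set ℝ} {K : Set X}
    (hI : I ∈ nhds t₀) (hIc : IsCompact I) (hK : IsCompact K)
    (hF : ∀ t ∈ I, Continuous (F t)) (hF' : Continuous fun p : ℝ × X ↦ F' p.1 p.2)
    (hF_supp : ∀ t ∈ I, ∀ x ∉ K, F t x = 0) (hF'_supp : ∀ t ∈ I, ∀ x ∉ K, F' t x = 0)
    (hderiv : ∀ t ∈ I, ∀ x, HasDerivAt (F · x) (F' t x) t) :
    HasDerivAt (fun t ↦ ∫ x, F t x ∂μ) (∫ x, F' t₀ x ∂μ) t₀ := by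
  have ht₀ : t₀ ∈ I := mem_of_mem_nhds hI
  have integrable_of_support {u : X → G} (hu : Continuous u) (h : ∀ x ∉ K, u x = 0) :
      Integrable u μ :=
    hu.integrable_of_hasCompactSupport (HasCompactSupport.intro hK h)
  obtain ⟨C, hC⟩ := (hIc.prod hK).exists_bound_of_continuousOn hF'.continuousOn
  have hbound : ∀ x, ∀ t ∈ I, ‖F' t x‖ ≤ K.indicator (fun _ ↦ C) x := by
    intro x t ht
    by_cases hx : x ∈ K
    · simpa only [Set.indicator_of_mem hx] using hC (t, x) ⟨ht, hx⟩
    · rw [Set.indicator_of_notMem hx, hF'_supp t ht x hx, norm_zero]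
  have hbound_int : Integrable (K.indicator fun _ ↦ C) μ :=
    (integrableOn_const hK.measure_ne_top).integrable_indicator hK.measurableSet
  refine (hasDerivAt_integral_of_dominated_loc_of_deriv_le hI ?_
    (integrable_of_support (hF t₀ ht₀) (hF_supp t₀ ht₀))
    (integrable_of_support (hF'.comp (Continuous.prodMk_right t₀))
      (hF'_supp t₀ ht₀)).aestronglyMeasurable
    (Eventually.of_forall hbound) hbound_int
    (Eventually.of_forall fun x t ht ↦ hderiv t ht x)).2
  filter_upwards [hI] with t ht
  exact (integrable_of_support (hF t ht) (hF_supp t ht)).aestronglyMeasurable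

open scoped Pointwise in
theorem hasDerivAt_integral_comp_smul {E : Type*} [NormedAddCommGroup E] [NormedSpace ℝ E]
    [MeasurableSpace E] [OpensMeasurableSpace E] {μ : Measure E} [IsFiniteMeasureOnCompacts μ]
    {g : E → G} (hg : ContDiff ℝ 1 g) (hsupp : HasCompactSupport g) :
    HasDerivAt (fun t : ℝ ↦ ∫ x, g (t • x) ∂μ) (∫ x, fderiv ℝ g x x ∂μ) 1 := by
  have hmem_of {t : ℝ} (ht : t ∈ Set.Icc (1 / 2 : ℝ) 2) {x : E} (hx : t • x ∈ tsupport g) :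
      x ∈ Set.Icc (1 / 2 : ℝ) 2 • tsupport g := by
    have ht0 : 0 < t := one_half_pos.trans_le ht.1
    refine ⟨t⁻¹, ⟨?_, ?_⟩, t • x, hx, inv_smul_smul₀ ht0.ne' x⟩
    · rw [one_div]
      exact inv_anti₀ ht0 ht.2
    · rw [inv_le_comm₀ ht0 two_pos, ← one_div]
      exact ht.1
  have hderiv := hasDerivAt_integral_of_continuous_of_compact_support (μ := μ) (t₀ := 1)
    (F := fun t x ↦ g (t • x)) (F' := fun t x ↦ fderiv ℝ g (t • x) x)
    (Icc_mem_nhds (by norm_num) (by norm_num)) isCompact_Icc (isCompact_Icc.smul_set hsupp)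
    (fun t _ ↦ hg.continuous.comp (continuous_const_smul t))
    (((hg.continuous_fderiv one_ne_zero).comp continuous_smul).clm_apply continuous_snd)
    (fun t ht x hx ↦ image_eq_zero_of_notMem_tsupport fun h ↦ hx (hmem_of ht h))
    (fun t ht x hx ↦ by
      rw [fderiv_of_notMem_tsupport ℝ fun h ↦ hx (hmem_of ht h), zero_apply])
    (fun t _ x ↦ (hg.differentiable one_ne_zero (t • x)).hasFDerivAt.comp_hasDerivAt t
      (by simpa only [id, one_smul] using (hasDerivAt_id t).smul_const x))
  simpa only [one_smul] using hderiv

end ParametricIntegral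

/-- A measure is homogeneous of degree `d` if it is multiplied by `t ^ d` under the dilation by
each `t > 0`, that is `μ (t • s) = t ^ d * μ s`. This is encoded by pushing `μ` forward, where
the factor becomes `t ^ (-d)`. -/
def IsHomogeneousMeasure {E : Type*} [SMul ℝ E] [MeasurableSpace E] (μ : Measure E) (d : ℝ) :
    Prop :=
  ∀ t : ℝ, 0 < t → μ.map (t • ·) = ENNReal.ofReal (t ^ (-d)) • μ

namespace IsHomogeneousMeasure

variable {E : Type*} [NormedAddCommGroup E] [NormedSpace ℝ E] [MeasurableSpace E] [BorelSpace E]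
  {μ : Measure E} {d : ℝ}

section Constructions

theorem of_isAddHaarMeasure [FiniteDimensional ℝ E] (μ : Measure E) [μ.IsAddHaarMeasure] :
    IsHomogeneousMeasure μ (Module.finrank ℝ E) := fun t ht ↦ by
  rw [Measure.map_addHaar_smul μ ht.ne', rpow_neg ht.le, rpow_natCast, abs_of_pos (by positivity)]

theorem restrict (hμ : IsHomogeneousMeasure μ d) {S : Set E}
    (hS : ∀ t : ℝ, 0 < t → (t • ·) ⁻¹' S = S) : IsHomogeneousMeasure (μ.restrict S) d :=
  fun t ht ↦ by
  calc
    (μ.restrict S).map (t • ·) = (μ.map (t • ·)).restrict S := by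
      conv_lhs => rw [← hS t ht]
      exact ((MeasurableEquiv.smul₀ t ht.ne').restrict_map μ S).symm
    _ = ENNReal.ofReal (t ^ (-d)) • μ.restrict S := by rw [hμ t ht, Measure.restrict_smul]

theorem withDensity (hμ : IsHomogeneousMeasure μ d) {w : E → ENNReal} (hw : Measurable w) {a : ℝ}
    (hwa : ∀ t : ℝ, 0 < t → ∀ x, w (t • x) = ENNReal.ofReal (t ^ a) * w x) :
    IsHomogeneousMeasure (μ.withDensity w) (d + a) := fun t ht ↦ by
  have hsmul : Measurable (t • · : E → E) := measurable_const_smul t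
  have hw_eq (x : E) : w x = ENNReal.ofReal (t ^ (-a)) * w (t • x) := by
    rw [hwa t ht, ← mul_assoc, ← ENNReal.ofReal_mul (by positivity), ← rpow_add ht,
      neg_add_cancel, rpow_zero, ENNReal.ofReal_one, one_mul]
  ext s hs
  calc
    (μ.withDensity w).map (t • ·) s = ∫⁻ x in (t • ·) ⁻¹' s, w x ∂μ := by
      rw [Measure.map_apply hsmul hs, withDensity_apply _ (hsmul hs)]
    _ = ENNReal.ofReal (t ^ (-a)) * ∫⁻ x in (t • ·) ⁻¹' s, w (t • x) ∂μ := by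
      rw [← lintegral_const_mul _ (show Measurable fun x ↦ w (t • x) from hw.comp hsmul)]
      simp only [← hw_eq]
    _ = ENNReal.ofReal (t ^ (-a)) * (ENNReal.ofReal (t ^ (-d)) * ∫⁻ x in s, w x ∂μ) := by
      rw [← setLIntegral_map hs hw hsmul, hμ t ht, setLIntegral_smul_measure, smul_eq_mul]
    _ = (ENNReal.ofReal (t ^ (-(d + a))) • μ.withDensity w) s := by
      rw [← mul_assoc, ← ENNReal.ofReal_mul (by positivity), ← rpow_add ht, Measure.smul_apply,
        smul_eq_mul, withDensity_apply _ hs, neg_add_rev]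

end Constructions

section Euler

variable {F : Type*} [NormedAddCommGroup F] [NormedSpace ℝ F]

theorem integral_comp_smul (hμ : IsHomogeneousMeasure μ d) (g : E → F) {t : ℝ} (ht : 0 < t) :
    ∫ x, g (t • x) ∂μ = t ^ (-d) • ∫ x, g x ∂μ := by
  calc
    ∫ x, g (t • x) ∂μ = ∫ x, g x ∂(μ.map (t • ·)) :=
      ((MeasurableEquiv.smul₀ t ht.ne').measurableEmbedding.integral_map g).symm
    _ = t ^ (-d) • ∫ x, g x ∂μ := by
      rw [hμ t ht, integral_smul_measure, ENNReal.toReal_ofReal (by positivity)]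

theorem integral_fderiv_apply_self [IsFiniteMeasureOnCompacts μ] (hμ : IsHomogeneousMeasure μ d)
    {g : E → F} (hg : ContDiff ℝ 1 g) (hsupp : HasCompactSupport g) :
    ∫ x, fderiv ℝ g x x ∂μ = -d • ∫ x, g x ∂μ := by
  have hpow : HasDerivAt (fun t : ℝ ↦ t ^ (-d) • ∫ x, g x ∂μ) (-d • ∫ x, g x ∂μ) 1 := by
    simpa only [one_rpow, mul_one] using
      (hasDerivAt_rpow_const (p := -d) (Or.inl one_ne_zero)).smul_const (∫ x, g x ∂μ)
  refine (hasDerivAt_integral_comp_smul hg hsupp).unique (hpow.congr_of_eventuallyEq ?_)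
  filter_upwards [lt_mem_nhds one_pos] with t ht
  exact hμ.integral_comp_smul g ht

end Euler

section Heisenberg

variable {F : Type*} [NormedAddCommGroup F] [InnerProductSpace ℝ F]
  [IsFiniteMeasureOnCompacts μ] {f : E → F}

theorem integral_inner_fderiv_apply_self (hμ : IsHomogeneousMeasure μ d) (hf : ContDiff ℝ 1 f)
    (hsupp : HasCompactSupport f) :
    ∫ x, inner ℝ (f x) (fderiv ℝ f x x) ∂μ = -(d / 2) * ∫ x, ‖f x‖ ^ 2 ∂μ := by
  have hfderiv (x : E) :
      fderiv ℝ (fun y ↦ ‖f y‖ ^ 2) x x = 2 * inner ℝ (f x) (fderiv ℝ f x x) := by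
    simp [((hf.differentiable one_ne_zero x).hasFDerivAt.norm_sq).fderiv]
  have heuler := hμ.integral_fderiv_apply_self (hf.norm_sq ℝ)
    (hsupp.comp_left (g := fun y ↦ ‖y‖ ^ 2) (by simp))
  simp only [hfderiv, integral_const_mul, smul_eq_mul] at heuler
  linarith

theorem heisenberg_uncertainty (hμ : IsHomogeneousMeasure μ d) (hf : ContDiff ℝ 1 f)
    (hsupp : HasCompactSupport f) :
    d ^ 2 / 4 * (∫ x, ‖f x‖ ^ 2 ∂μ) ^ 2 ≤
      (∫ x, ‖f x‖ ^ 2 * ‖x‖ ^ 2 ∂μ) * ∫ x, ‖fderiv ℝ f x‖ ^ 2 ∂μ := by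
  have hu : MemLp (fun x ↦ ‖f x‖ * ‖x‖) 2 μ :=
    (hf.continuous.norm.mul continuous_norm).memLp_of_hasCompactSupport hsupp.norm.mul_right
  have hv : MemLp (fun x ↦ ‖fderiv ℝ f x‖) 2 μ :=
    (hf.continuous_fderiv one_ne_zero).norm.memLp_of_hasCompactSupport (hsupp.fderiv ℝ).norm
  have hinner_le : |∫ x, inner ℝ (f x) (fderiv ℝ f x x) ∂μ| ≤
      ∫ x, ‖f x‖ * ‖x‖ * ‖fderiv ℝ f x‖ ∂μ := by
    rw [← norm_eq_abs]
    refine norm_integral_le_of_norm_le (hu.integrable_mul hv) (Eventually.of_forall fun x ↦ ?_)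
    calc
      ‖inner ℝ (f x) (fderiv ℝ f x x)‖ ≤ ‖f x‖ * ‖fderiv ℝ f x x‖ := norm_inner_le_norm _ _
      _ ≤ ‖f x‖ * (‖fderiv ℝ f x‖ * ‖x‖) := by gcongr; exact (fderiv ℝ f x).le_opNorm x
      _ = ‖f x‖ * ‖x‖ * ‖fderiv ℝ f x‖ := by ring
  calc
    d ^ 2 / 4 * (∫ x, ‖f x‖ ^ 2 ∂μ) ^ 2 = |∫ x, inner ℝ (f x) (fderiv ℝ f x x) ∂μ| ^ 2 := by
      rw [sq_abs, hμ.integral_inner_fderiv_apply_self hf hsupp]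
      ring
    _ ≤ (∫ x, ‖f x‖ * ‖x‖ * ‖fderiv ℝ f x‖ ∂μ) ^ 2 := by gcongr
    _ ≤ (∫ x, (‖f x‖ * ‖x‖) ^ 2 ∂μ) * ∫ x, ‖fderiv ℝ f x‖ ^ 2 ∂μ := sq_integral_mul_le hu hv
    _ = (∫ x, ‖f x‖ ^ 2 * ‖x‖ ^ 2 ∂μ) * ∫ x, ‖fderiv ℝ f x‖ ^ 2 ∂μ := by simp only [mul_pow]

end Heisenberg

end IsHomogeneousMeasure

section MonomialWeight

variable {ι : Type*} [Fintype ι] {A : ι → ℝ}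

theorem preimage_smul_monSet (A : ι → ℝ) {t : ℝ} (ht : 0 < t) :
    (t • ·) ⁻¹' monSet A = monSet A := by
  ext x
  simp [monSet, ht]

theorem monWeight_smul (A : ι → ℝ) {t : ℝ} (ht : 0 < t) (x : EuclideanSpace ℝ ι) :
    monWeight A (t • x) = t ^ (∑ i, A i) * monWeight A x := by
  simp only [monWeight, PiLp.smul_apply, smul_eq_mul, abs_mul, abs_of_pos ht,
    mul_rpow ht.le (abs_nonneg _), Finset.prod_mul_distrib, rpow_sum_of_pos ht]

theorem monWeight_nonneg (A : ι → ℝ) (x : EuclideanSpace ℝ ι) : 0 ≤ monWeight A x :=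
  Finset.prod_nonneg fun _ _ ↦ rpow_nonneg (abs_nonneg _) _

theorem measurable_monWeight (A : ι → ℝ) : Measurable (monWeight A) := by
  unfold monWeight
  fun_prop

theorem continuous_monWeight (hA : ∀ i, 0 ≤ A i) : Continuous (monWeight A) :=
  continuous_finsetProd _ fun i _ ↦
    Continuous.rpow_const (by fun_prop) fun _ ↦ Or.inr (hA i)

/-- The measure `x^A dx` on `ℝ^n_A`, as a measure on the whole space that vanishes outside
`ℝ^n_A`. -/
def monMeasure (A : ι → ℝ) : Measure (EuclideanSpace ℝ ι) :=
  (volume.restrict (monSet A)).withDensity fun x ↦ ENNReal.ofReal (monWeight A x)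

theorem integral_monMeasure (A : ι → ℝ) (g : EuclideanSpace ℝ ι → ℝ) :
    ∫ x, g x ∂monMeasure A = ∫ x in monSet A, g x * monWeight A x := by
  rw [monMeasure, integral_withDensity_eq_integral_toReal_smul
    (measurable_monWeight A).ennreal_ofReal (Eventually.of_forall fun _ ↦ ENNReal.ofReal_lt_top)]
  simp only [ENNReal.toReal_ofReal (monWeight_nonneg A _), smul_eq_mul, mul_comm]

theorem isLocallyFiniteMeasure_monMeasure (hA : ∀ i, 0 ≤ A i) :
    IsLocallyFiniteMeasure (monMeasure A) :=
  .withDensity_ofReal (continuous_monWeight hA)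

theorem isHomogeneousMeasure_monMeasure (A : ι → ℝ) :
    IsHomogeneousMeasure (monMeasure A) (monDim A) := by
  rw [monDim, ← finrank_euclideanSpace (𝕜 := ℝ)]
  refine ((IsHomogeneousMeasure.of_isAddHaarMeasure volume).restrict
    fun t ht ↦ preimage_smul_monSet A ht).withDensity
      (measurable_monWeight A).ennreal_ofReal fun t ht x ↦ ?_
  rw [monWeight_smul A ht, ENNReal.ofReal_mul (by positivity)]

theorem heisenberg_monomial_weight_general (hA : ∀ i, 0 ≤ A i) {F : Type*} [NormedAddCommGroup F]
    [InnerProductSpace ℝ F] {f : EuclideanSpace ℝ ι → F} (hf : ContDiff ℝ 1 f)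
    (hsupp : HasCompactSupport f) :
    monDim A ^ 2 / 4 * (∫ x in monSet A, ‖f x‖ ^ 2 * monWeight A x) ^ 2 ≤
      (∫ x in monSet A, ‖f x‖ ^ 2 * ‖x‖ ^ 2 * monWeight A x) *
        ∫ x in monSet A, ‖fderiv ℝ f x‖ ^ 2 * monWeight A x := by
  have := isLocallyFiniteMeasure_monMeasure hA
  simpa only [integral_monMeasure] using
    (isHomogeneousMeasure_monMeasure A).heisenberg_uncertainty hf hsupp

end MonomialWeight

/-- Heisenberg's uncertainty principle type inequality with monomial weights. -/
theorem heisenberg_monomial_weight {n : ℕ} (hn : 0 < n) (A : Fin n → ℝ) (hA : ∀ i, 0 ≤ A i)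
    (f : EuclideanSpace ℝ (Fin n) → ℝ) (hf : ContDiff ℝ 1 f) (hsupp : HasCompactSupport f)
    (hnorm : ∫ x in monSet A, f x ^ 2 * monWeight A x = 1) :
    monDim A ^ 2 / 4 ≤
      (∫ x in monSet A, f x ^ 2 * ‖x‖ ^ 2 * monWeight A x) *
        ∫ x in monSet A, ‖fderiv ℝ f x‖ ^ 2 * monWeight A x := by
  simpa only [norm_eq_abs, sq_abs, hnorm, one_pow, mul_one] using
    heisenberg_monomial_weight_general hA hf hsupp
end
end
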